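/- Let H be a finite-dimensional complex vector space with a real structure c, carrying a Hodge structure of weight k and a horizontal (sl₂)²-action defined over ℝ. Then H is the internal direct sum of a finite family of invariant irreducible subspaces. -/

import Mathlib

/-- A Hodge structure of weight `k` on a finite-dimensional complex vector space `H`
with real structure `c`, together with a horizontal `(𝔰𝔩₂)²`-action defined over `ℝ`. -/
structure HorizontalSL2Data (H : Type*) [AddCommGroup H] [Module ℂ H] where
  /-- The real structure: a conjugate-linear involution. -/
  c : H →ₛₗ[starRingEnd ℂ] H
  c_invol : ∀ x, c (c x) = x
  /-- The weight. -/
  k : ℤ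
  /-- The Hodge pieces `H^{p,q}` with `q = k - p`, indexed by `p`. -/
  Hpq : ℤ → Submodule ℂ H
  internal : DirectSum.IsInternal Hpq
  conj_mem : ∀ p : ℤ, ∀ x ∈ Hpq p, c x ∈ Hpq (k - p)
  /-- The raising operators `N_j⁺`. -/
  Np : Fin 2 → Module.End ℂ H
  /-- The lowering operators `N_j⁻`. -/
  Nm : Fin 2 → Module.End ℂ H
  /-- The semisimple operators `Y_j`. -/
  Y : Fin 2 → Module.End ℂ H
  c_comm_Np : ∀ (j : Fin 2) (x : H), c (Np j x) = Np j (c x)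
  c_comm_Nm : ∀ (j : Fin 2) (x : H), c (Nm j x) = Nm j (c x)
  c_comm_Y : ∀ (j : Fin 2) (x : H), c (Y j x) = Y j (c x)
  sl2_YNp : ∀ j, Y j * Np j - Np j * Y j = (2 : ℂ) • Np j
  sl2_YNm : ∀ j, Y j * Nm j - Nm j * Y j = (-2 : ℂ) • Nm j
  sl2_NpNm : ∀ j, Np j * Nm j - Nm j * Np j = Y j
  factors_commute : ∀ j j' : Fin 2, j ≠ j' →
    Commute (Np j) (Np j') ∧ Commute (Np j) (Nm j') ∧ Commute (Np j) (Y j') ∧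
    Commute (Nm j) (Np j') ∧ Commute (Nm j) (Nm j') ∧ Commute (Nm j) (Y j') ∧
    Commute (Y j) (Np j') ∧ Commute (Y j) (Nm j') ∧ Commute (Y j) (Y j')
  horizontal_lower : ∀ (j : Fin 2) (p : ℤ), ∀ x ∈ Hpq p,
    (Np j + Nm j + Complex.I • Y j) x ∈ Hpq (p - 1)
  horizontal_raise : ∀ (j : Fin 2) (p : ℤ), ∀ x ∈ Hpq p,
    (Np j + Nm j - Complex.I • Y j) x ∈ Hpq (p + 1)
  horizontal_zero : ∀ (j : Fin 2) (p : ℤ), ∀ x ∈ Hpq p,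
    (Np j - Nm j) x ∈ Hpq p

/-- A subspace `U ⊆ H` is invariant if it is stable under the real structure and under
all six operators, and is graded by the Hodge decomposition. -/
def HorizontalSL2Data.IsInvariant {H : Type*} [AddCommGroup H] [Module ℂ H]
    (D : HorizontalSL2Data H) (U : Submodule ℂ H) : Prop :=
  (∀ x ∈ U, D.c x ∈ U) ∧
  (∀ j : Fin 2, ∀ x ∈ U, D.Np j x ∈ U) ∧
  (∀ j : Fin 2, ∀ x ∈ U, D.Nm j x ∈ U) ∧
  (∀ j : Fin 2, ∀ x ∈ U, D.Y j x ∈ U) ∧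
  U = ⨆ p : ℤ, U ⊓ D.Hpq p

/-- An invariant subspace is irreducible if it is nonzero and contains no invariant
subspaces other than `0` and itself. -/
def HorizontalSL2Data.IsIrreducible {H : Type*} [AddCommGroup H] [Module ℂ H]
    (D : HorizontalSL2Data H) (U : Submodule ℂ H) : Prop :=
  U ≠ ⊥ ∧ D.IsInvariant U ∧
  ∀ U' : Submodule ℂ H, D.IsInvariant U' → U' ≤ U → U' = ⊥ ∨ U' = U

/-!
Let `U` be an invariant subspace. The projections onto `U` form an affine space on which `𝔰𝔩₂` acts
by commutators. Let `p(C)` be the projection onto the generalised kernel of the Casimir operator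
`C` of this action, written as a polynomial in `C`. Since an `𝔰𝔩₂`-triple with nilpotent Casimir
operator is zero, `p(C)` sends a projection onto `U` to one which commutes with the triple, and
with everything that commutes with the triple and the original projection. Treat the two factors in
turn. Next, average the resulting projection with its complex conjugate, and then take its part of
degree zero with respect to the Hodge decomposition. This part still commutes with the triples,
because they are spanned by operators of Hodge degrees `-1`, `1` and `0`. Its kernel is an invariant
complement of `U`.

The invariant subspaces thus form a complemented modular lattice of finite length, whose top element
is an independent supremum of finitely many atoms.
-/

section Lattice

variable (α : Type*) [CompleteLattice α] [IsModularLattice α] [WellFoundedGT α]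

theorem exists_fin_isAtom_iSupIndep_iSup_eq_top [ComplementedLattice α] :
    ∃ (n : ℕ) (a : Fin n → α), (∀ i, IsAtom (a i)) ∧ iSupIndep a ∧ ⨆ i, a i = ⊤ := by
  have : IsCompactlyGenerated α := CompleteLattice.isCompactlyGenerated_of_wellFoundedGT
  have : IsAtomistic α := isAtomistic_of_complementedLattice
  obtain ⟨s, hind, htop, hatom⟩ :=
    exists_sSupIndep_of_sSup_atoms_eq_top (sSup_atoms_eq_top (α := α))
  have : Finite s := WellFoundedGT.finite_of_sSupIndep hind
  let e := (Finite.equivFin s).symm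
  refine ⟨Nat.card s, fun i ↦ e i, fun i ↦ hatom (e i).2,
    ((sSupIndep_iff s).mp hind).comp e.injective, ?_⟩
  rw [e.iSup_comp (g := Subtype.val), ← sSup_eq_iSup', htop]

variable {α}

theorem exists_fin_isAtom_iSupIndep_coe_iSup_coe_eq_top (L : CompleteSublattice α)
    (hL : ∀ a ∈ L, ∃ b ∈ L, IsCompl a b) :
    ∃ (n : ℕ) (a : Fin n → L), (∀ i, IsAtom (a i)) ∧ iSupIndep (fun i ↦ (a i : α)) ∧
      ⨆ i, (a i : α) = ⊤ := by
  have : IsModularLattice L := ⟨fun y _ hxz ↦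
    IsModularLattice.sup_inf_le_assoc_of_le (α := α) (y : α) hxz⟩
  have : WellFoundedGT L :=
    StrictMono.wellFoundedGT (f := fun a : L ↦ (a : α)) fun _ _ h ↦ h
  have : ComplementedLattice L := CompleteSublattice.isComplemented_iff.mpr hL
  obtain ⟨n, a, hatom, hind, htop⟩ := exists_fin_isAtom_iSupIndep_iSup_eq_top L
  refine ⟨n, a, hatom, ?_, ?_⟩
  · simpa only [iSupIndep, CompleteSublattice.disjoint_iff, CompleteSublattice.coe_iSup] using hind
  · rw [← CompleteSublattice.coe_iSup, htop, CompleteSublattice.coe_top]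

end Lattice

open Polynomial

theorem aeval_apply_sub_mem {K M : Type*} [CommRing K] [AddCommGroup M] [Module K M]
    {T : Module.End K M} {N : Submodule K M} (hN : N ∈ T.invtSubmodule) {x : M} (hx : T x ∈ N)
    {p : K[X]} (hp : X ∣ 1 - p) : aeval T p x - x ∈ N := by
  obtain ⟨q, hq⟩ := hp
  have hpx : aeval T p x - x = -aeval T q (T x) := by
    have := congr(aeval T $hq x)
    rw [mul_comm, map_mul, aeval_X, map_sub, map_one] at this
    rw [← Module.End.mul_apply, ← this, LinearMap.sub_apply, Module.End.one_apply, neg_sub]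
  rw [hpx]
  exact N.neg_mem (aeval_apply_smul_mem_of_le_comap hx q T hN)

section Fitting

variable {K : Type*} [Field K]

theorem exists_isIdempotentElem_aeval {A : Type*} [Ring A] [Algebra K A] {c : A}
    (hc : IsIntegral K c) :
    ∃ p : K[X], X ∣ 1 - p ∧ IsIdempotentElem (aeval c p) ∧ IsNilpotent (c * aeval c p) := by
  obtain ⟨g, hg, hXg⟩ :=
    exists_eq_pow_rootMultiplicity_mul_and_not_dvd (minpoly K c) (minpoly.ne_zero hc) 0
  rw [C_0, sub_zero] at hg hXg
  set n := (minpoly K c).rootMultiplicity 0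
  have hzero {q : K[X]} (hq : X ^ n * g ∣ q) : aeval c q = 0 := by
    rw [← hg] at hq
    exact minpoly.dvd_iff.mp hq
  obtain ⟨a, b, hab⟩ : IsCoprime (X ^ (n + 1)) g :=
    ((irreducible_X.coprime_iff_not_dvd).mpr hXg).pow_left
  have hp : 1 - b * g = a * X ^ (n + 1) := by
    rw [← hab, add_sub_cancel_right]
  refine ⟨b * g, ?_, ?_, n + 1, ?_⟩
  · rw [hp, pow_succ]
    exact (Dvd.intro_left _ rfl).mul_left a
  · rw [IsIdempotentElem, ← map_mul, ← sub_eq_zero, ← map_sub]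
    refine hzero ⟨- (a * b * X), ?_⟩
    linear_combination (-b * g) * hp
  · have hmul : c * aeval c (b * g) = aeval c (X * (b * g)) := by rw [map_mul _ X, aeval_X]
    rw [hmul, ← map_pow]
    exact hzero ⟨X * b * (b * g) ^ n, by ring⟩

theorem isNilpotent_of_forall_eigenvalue_eq_zero [IsAlgClosed K] {M : Type*} [AddCommGroup M]
    [Module K M] [FiniteDimensional K M] {g : Module.End K M}
    (hg : ∀ μ, g.HasEigenvalue μ → μ = 0) : IsNilpotent g := by
  rw [LinearMap.isNilpotent_iff_charpoly]
  have hroots : g.charpoly.roots = Multiset.replicate (Module.finrank K M) 0 := by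
    rw [Multiset.eq_replicate, ← (IsAlgClosed.splits _).natDegree_eq_card_roots,
      LinearMap.charpoly_natDegree]
    exact ⟨rfl, fun μ hμ ↦ hg μ (g.hasEigenvalue_iff_isRoot_charpoly μ |>.mpr
      (isRoot_of_mem_roots hμ))⟩
  rw [(IsAlgClosed.splits g.charpoly).eq_prod_roots_of_monic g.charpoly_monic, hroots]
  simp

end Fitting

section Sl2Relations

attribute [local instance] LieRing.ofAssociativeRing

/-- `h`, `e`, `f` satisfy the relations of a standard `𝔰𝔩₂`-triple. Unlike in `IsSl2Triple`, the
element `h` may be zero, so that the notion passes to images under homomorphisms. -/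
structure Sl2Relations {L : Type*} [LieRing L] (h e f : L) : Prop where
  lie_e_f : ⁅e, f⁆ = h
  lie_h_e : ⁅h, e⁆ = 2 • e
  lie_h_f : ⁅h, f⁆ = -(2 • f)

/-- Twice the Casimir element of the `𝔰𝔩₂`-triple `h`, `e`, `f`, normalised so that a highest
weight vector of weight `μ` has eigenvalue `μ * (μ + 2)`. -/
def sl2Casimir {A : Type*} [Ring A] (h e f : A) : A :=
  h * h + 2 • h + 4 • (f * e)

section Ring

variable {A : Type*} [Ring A] {h e f p x y : A}

theorem commute_sl2Casimir_right (hx : ∀ y ∈ ({h, e, f} : Set A), Commute x y) :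
    Commute x (sl2Casimir h e f) := by
  simp only [Set.mem_insert_iff, Set.mem_singleton_iff, forall_eq_or_imp, forall_eq] at hx
  obtain ⟨hh, he, hf⟩ := hx
  exact ((hh.mul_right hh).add_right (hh.smul_right 2)).add_right
    ((hf.mul_right he).smul_right 4)

theorem lie_mul_right_of_isIdempotentElem (hp : IsIdempotentElem p)
    (hx : Commute p x) (hy : Commute p y) : ⁅x * p, y * p⁆ = ⁅x, y⁆ * p := by
  rw [Ring.lie_def, Ring.lie_def, hx.mul_mul_mul_comm, hy.mul_mul_mul_comm, hp.eq, sub_mul]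

theorem sl2Casimir_mul_right (hp : IsIdempotentElem p) (hh : Commute p h)
    (he : Commute p e) :
    sl2Casimir (h * p) (e * p) (f * p) = sl2Casimir h e f * p := by
  simp only [sl2Casimir, hh.mul_mul_mul_comm, he.mul_mul_mul_comm, hp.eq, add_mul, smul_mul_assoc]

end Ring

section End

variable {R M : Type*} [Ring R] [AddCommGroup M] [Module R M] {h e f : Module.End R M}
  {N : Submodule R M}

theorem sl2Casimir_apply_mem (hN : ∀ a ∈ ({h, e, f} : Set (Module.End R M)), N ∈ a.invtSubmodule)
    {x : M} (hx : ∀ a ∈ ({h, e, f} : Set (Module.End R M)), a x ∈ N) :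
    sl2Casimir h e f x ∈ N := by
  simp only [Set.mem_insert_iff, Set.mem_singleton_iff, forall_eq_or_imp, forall_eq] at hN hx
  exact N.add_mem (N.add_mem (hN.1 hx.1) (N.nsmul_mem hx.1 2)) (N.nsmul_mem (hN.2.2 hx.2.1) 4)

theorem mem_invtSubmodule_sl2Casimir
    (hN : ∀ a ∈ ({h, e, f} : Set (Module.End R M)), N ∈ a.invtSubmodule) :
    N ∈ (sl2Casimir h e f).invtSubmodule :=
  fun _ hx ↦ sl2Casimir_apply_mem hN fun a ha ↦ hN a ha hx

end End

namespace Sl2Relations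

section LieRing

variable {L L' : Type*} [LieRing L] [LieRing L'] {h e f : L}

theorem symm (r : Sl2Relations h e f) : Sl2Relations (-h) f e where
  lie_e_f := by rw [← lie_skew, r.lie_e_f]
  lie_h_e := by rw [neg_lie, r.lie_h_f, neg_neg]
  lie_h_f := by rw [neg_lie, r.lie_h_e]

theorem map {R : Type*} [CommRing R] [LieAlgebra R L] [LieAlgebra R L'] (r : Sl2Relations h e f)
    (φ : L →ₗ⁅R⁆ L') : Sl2Relations (φ h) (φ e) (φ f) where
  lie_e_f := by rw [← φ.map_lie, r.lie_e_f]
  lie_h_e := by rw [← φ.map_lie, r.lie_h_e, map_nsmul]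
  lie_h_f := by rw [← φ.map_lie, r.lie_h_f, map_neg, map_nsmul]

end LieRing

section Ring

variable {A : Type*} [Ring A] {h e f : A}

theorem mul_e_f (r : Sl2Relations h e f) : e * f = f * e + h := by
  rw [← r.lie_e_f, Ring.lie_def, add_sub_cancel]

theorem mul_h_e (r : Sl2Relations h e f) : h * e = e * h + 2 • e := by
  rw [← r.lie_h_e, Ring.lie_def, add_sub_cancel]

theorem casimir_symm (r : Sl2Relations h e f) : sl2Casimir (-h) f e = sl2Casimir h e f := by
  rw [sl2Casimir, sl2Casimir, r.mul_e_f]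
  noncomm_ring

theorem commute_casimir_h (r : Sl2Relations h e f) : Commute (sl2Casimir h e f) h := by
  have hf : Commute (f * e) h := by
    have := r.symm.mul_h_e
    rw [commute_iff_lie_eq, Ring.lie_def]
    linear_combination (norm := noncomm_ring) -f * r.mul_h_e + this * e
  exact (((Commute.refl h).mul_left (.refl h)).add_left ((Commute.refl h).smul_left 2)).add_left
    (hf.smul_left 4)

theorem commute_casimir_e (r : Sl2Relations h e f) : Commute (sl2Casimir h e f) e := by
  rw [commute_iff_lie_eq, Ring.lie_def, sl2Casimir]
  linear_combination (norm := noncomm_ring)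
    h * r.mul_h_e + r.mul_h_e * h - 4 * r.mul_e_f * e

theorem commute_casimir_f (r : Sl2Relations h e f) : Commute (sl2Casimir h e f) f :=
  r.casimir_symm ▸ r.symm.commute_casimir_e

theorem commute_casimir (r : Sl2Relations h e f) {x : A} (hx : x ∈ ({h, e, f} : Set A)) :
    Commute (sl2Casimir h e f) x := by
  rcases hx with rfl | rfl | rfl
  exacts [r.commute_casimir_h, r.commute_casimir_e, r.commute_casimir_f]

theorem mul_right (r : Sl2Relations h e f) {p : A} (hp : IsIdempotentElem p)
    (hcomm : ∀ x ∈ ({h, e, f} : Set A), Commute p x) :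
    Sl2Relations (h * p) (e * p) (f * p) := by
  simp only [Set.mem_insert_iff, Set.mem_singleton_iff, forall_eq_or_imp, forall_eq] at hcomm
  obtain ⟨hh, he, hf⟩ := hcomm
  constructor
  · rw [lie_mul_right_of_isIdempotentElem hp he hf, r.lie_e_f]
  · rw [lie_mul_right_of_isIdempotentElem hp hh he, r.lie_h_e, smul_mul_assoc]
  · rw [lie_mul_right_of_isIdempotentElem hp hh hf, r.lie_h_f, neg_mul, smul_mul_assoc]

end Ring

section End

variable {K M : Type*} [Field K] [AddCommGroup M] [Module K M] {h e f : Module.End K M}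

theorem hasEigenvalue_add_two (r : Sl2Relations h e f) (hC : IsNilpotent (sl2Casimir h e f))
    {μ : K} (hμ : h.HasEigenvalue μ) : h.HasEigenvalue (μ + 2) ∨ μ = 0 ∨ μ = -2 := by
  obtain ⟨v, hv⟩ := hμ.exists_hasEigenvector
  have hhv : h v = μ • v := hv.apply_eq_smul
  by_cases hev : e v = 0
  · have hCv : sl2Casimir h e f v = (μ * (μ + 2)) • v := by
      simp only [sl2Casimir, LinearMap.add_apply, LinearMap.smul_apply, Module.End.mul_apply, hev,
        hhv, map_smul, map_zero]
      module
    have := Module.End.hasEigenvalue_of_hasEigenvector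
      (Module.End.hasEigenvector_iff.mpr ⟨Module.End.mem_eigenspace_iff.mpr hCv, hv.2⟩)
    have := (this.isNilpotent_of_isNilpotent hC).eq_zero
    rw [mul_eq_zero, add_eq_zero_iff_eq_neg] at this
    exact .inr this
  · have hhev : h (e v) = (μ + 2) • e v := by
      rw [← Module.End.mul_apply, r.mul_h_e, LinearMap.add_apply, Module.End.mul_apply, hhv,
        map_smul, LinearMap.smul_apply]
      module
    exact .inl (Module.End.hasEigenvalue_of_hasEigenvector
      (Module.End.hasEigenvector_iff.mpr ⟨Module.End.mem_eigenspace_iff.mpr hhev, hev⟩))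

variable [CharZero K] [FiniteDimensional K M]

theorem exists_eigenvalue_eq_neg (r : Sl2Relations h e f) (hC : IsNilpotent (sl2Casimir h e f))
    {μ : K} (hμ : h.HasEigenvalue μ) : ∃ n : ℕ, μ = -n := by
  by_contra! hne
  have hstep (n : ℕ) : h.HasEigenvalue (μ + 2 * n) := by
    induction n with
    | zero => simpa using hμ
    | succ n ih =>
      rcases r.hasEigenvalue_add_two hC ih with h' | h' | h'
      · convert h' using 1
        push_cast
        ring
      · exact absurd (eq_neg_of_add_eq_zero_left h') (by exact_mod_cast hne (2 * n))
      · refine absurd (?_ : μ = _) (hne (2 * n + 2))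
        push_cast
        linear_combination h'
  refine Set.infinite_of_injective_forall_mem (f := fun n : ℕ ↦ μ + 2 * n) ?_ hstep
    h.finite_hasEigenvalue
  intro m n hmn
  simpa using hmn

theorem eigenvalue_eq_zero (r : Sl2Relations h e f) (hC : IsNilpotent (sl2Casimir h e f))
    {μ : K} (hμ : h.HasEigenvalue μ) : μ = 0 := by
  obtain ⟨m, hm⟩ := r.exists_eigenvalue_eq_neg hC hμ
  have hμ' : (-h).HasEigenvalue (-μ) := by
    obtain ⟨v, hv⟩ := hμ.exists_hasEigenvector
    refine Module.End.hasEigenvalue_of_hasEigenvector (x := v)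
      (Module.End.hasEigenvector_iff.mpr ⟨Module.End.mem_eigenspace_iff.mpr ?_, hv.2⟩)
    rw [LinearMap.neg_apply, hv.apply_eq_smul, neg_smul]
  obtain ⟨n, hn⟩ := r.symm.exists_eigenvalue_eq_neg (r.casimir_symm ▸ hC) hμ'
  have hmn : ((m + n : ℕ) : K) = 0 := by
    push_cast
    linear_combination hm + hn
  rw [hm, (Nat.add_eq_zero_iff.mp (Nat.cast_eq_zero.mp hmn)).1, Nat.cast_zero, neg_zero]

variable [IsAlgClosed K]

theorem raising_eq_zero_of_isNilpotent_casimir (r : Sl2Relations h e f)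
    (hC : IsNilpotent (sl2Casimir h e f)) : e = 0 := by
  obtain ⟨n, hn⟩ := isNilpotent_of_forall_eigenvalue_eq_zero fun μ ↦ r.eigenvalue_eq_zero hC
  have hsemi : SemiconjBy e (h + 2) h := by
    rw [SemiconjBy, r.mul_h_e, mul_add, two_smul, mul_two]
  have htwo : IsUnit (2 : Module.End K M) := by
    rw [← map_ofNat (algebraMap K (Module.End K M)) 2]
    exact (IsUnit.mk0 _ two_ne_zero).map _
  have hunit : IsUnit (h + 2) :=
    IsNilpotent.isUnit_add_right_of_commute ⟨n, hn⟩ htwo (Commute.ofNat_right h 2)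
  have := hsemi.pow_right n
  rw [SemiconjBy, hn, zero_mul] at this
  exact (hunit.pow n).mul_left_eq_zero.mp this

theorem eq_zero_of_isNilpotent_casimir (r : Sl2Relations h e f)
    (hC : IsNilpotent (sl2Casimir h e f)) {x : Module.End K M}
    (hx : x ∈ ({h, e, f} : Set (Module.End K M))) : x = 0 := by
  have he := r.raising_eq_zero_of_isNilpotent_casimir hC
  rcases hx with rfl | rfl | rfl
  · rw [← r.lie_e_f, he, zero_lie]
  · exact he
  · exact r.symm.raising_eq_zero_of_isNilpotent_casimir (r.casimir_symm ▸ hC)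

theorem exists_polynomial_casimir (r : Sl2Relations h e f) : ∃ p : K[X], X ∣ 1 - p ∧
    ∀ x ∈ ({h, e, f} : Set (Module.End K M)), x * aeval (sl2Casimir h e f) p = 0 := by
  obtain ⟨p, hXp, hp, hnil⟩ :=
    exists_isIdempotentElem_aeval (Algebra.IsIntegral.isIntegral (R := K) (sl2Casimir h e f))
  set R := aeval (sl2Casimir h e f) p
  have hcomm (x) (hx : x ∈ ({h, e, f} : Set (Module.End K M))) : Commute R x :=
    Algebra.commute_of_mem_adjoin_singleton_of_commute (aeval_mem_adjoin_singleton K _)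
      (r.commute_casimir hx).symm |>.symm
  -- `R` projects onto the generalised kernel of the Casimir element, so it cuts the triple down to
  -- one with nilpotent Casimir element.
  have hR := r.mul_right hp hcomm
  have hCR : IsNilpotent (sl2Casimir (h * R) (e * R) (f * R)) := by
    rwa [sl2Casimir_mul_right hp (hcomm h (by simp)) (hcomm e (by simp))]
  refine ⟨p, hXp, fun x hx ↦ hR.eq_zero_of_isNilpotent_casimir hCR ?_⟩
  rcases hx with rfl | rfl | rfl
  exacts [.inl rfl, .inr (.inl rfl), .inr (.inr rfl)]

end End

end Sl2Relations

section Projections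

variable {K M : Type*} [CommRing K] [AddCommGroup M] [Module K M] {U : Submodule K M}
  {a φ ψ : Module.End K M}

/-- The direction of the affine space of all projections onto `U`: the endomorphisms with image in
`U` and kernel containing `U`. -/
def projectionDirection (U : Submodule K M) : Submodule K (Module.End K M) :=
  Submodule.compatibleMaps ⊤ U ⊓ Submodule.compatibleMaps U ⊥

theorem mem_projectionDirection :
    φ ∈ projectionDirection U ↔ (∀ x, φ x ∈ U) ∧ ∀ x ∈ U, φ x = 0 := by
  simp [projectionDirection, Submodule.compatibleMaps, SetLike.le_def]

theorem isProj_of_sub_mem_projectionDirection (hφ : LinearMap.IsProj U φ)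
    (h : ψ - φ ∈ projectionDirection U) : LinearMap.IsProj U ψ := by
  rw [mem_projectionDirection] at h
  refine ⟨fun x ↦ ?_, fun x hx ↦ ?_⟩
  · rw [← sub_add_cancel ψ φ]
    exact U.add_mem (h.1 x) (hφ.map_mem x)
  · rw [sub_eq_zero.mp (h.2 x hx), hφ.map_id x hx]

theorem lie_mem_projectionDirection_of_isProj (ha : U ∈ a.invtSubmodule)
    (hφ : LinearMap.IsProj U φ) : ⁅a, φ⁆ ∈ projectionDirection U := by
  rw [mem_projectionDirection]
  refine ⟨fun x ↦ U.sub_mem (ha (hφ.map_mem x)) (hφ.map_mem (a x)), fun x hx ↦ ?_⟩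
  rw [Ring.lie_def, LinearMap.sub_apply, Module.End.mul_apply, Module.End.mul_apply, hφ.map_id x hx,
    hφ.map_id _ (ha hx), sub_self]

theorem projectionDirection_mem_invtSubmodule_ad (ha : U ∈ a.invtSubmodule) :
    projectionDirection U ∈ (LieAlgebra.ad K (Module.End K M) a).invtSubmodule := by
  intro φ hφ
  rw [mem_projectionDirection] at hφ
  rw [Submodule.mem_comap, LieAlgebra.ad_apply, Ring.lie_def, mem_projectionDirection]
  refine ⟨fun x ↦ U.sub_mem (ha (hφ.1 x)) (hφ.1 (a x)), fun x hx ↦ ?_⟩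
  rw [LinearMap.sub_apply, Module.End.mul_apply, Module.End.mul_apply, hφ.2 x hx,
    hφ.2 _ (ha hx), map_zero, sub_self]

end Projections

theorem Sl2Relations.exists_isProj_commute {K M : Type*} [Field K] [CharZero K] [IsAlgClosed K]
    [AddCommGroup M] [Module K M] [FiniteDimensional K M] {h e f : Module.End K M}
    (r : Sl2Relations h e f) {U : Submodule K M}
    (hU : ∀ a ∈ ({h, e, f} : Set (Module.End K M)), U ∈ a.invtSubmodule) {φ : Module.End K M}
    (hφ : LinearMap.IsProj U φ) :
    ∃ ψ, LinearMap.IsProj U ψ ∧ (∀ a ∈ ({h, e, f} : Set (Module.End K M)), Commute a ψ) ∧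
      ∀ T, (∀ a ∈ ({h, e, f} : Set (Module.End K M)), Commute T a) → Commute T φ → Commute T ψ := by
  let ad := LieAlgebra.ad K (Module.End K M)
  let C := sl2Casimir (ad h) (ad e) (ad f)
  have hset : ({ad h, ad e, ad f} : Set _) = ad '' {h, e, f} := by
    rw [Set.image_insert_eq, Set.image_insert_eq, Set.image_singleton]
  obtain ⟨p, hXp, hp⟩ := (r.map ad).exists_polynomial_casimir
  have hN : ∀ b ∈ ({ad h, ad e, ad f} : Set _), projectionDirection U ∈ b.invtSubmodule := by
    rw [hset, Set.forall_mem_image]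
    exact fun a ha ↦ projectionDirection_mem_invtSubmodule_ad (hU a ha)
  have hlie : ∀ b ∈ ({ad h, ad e, ad f} : Set _), b φ ∈ projectionDirection U := by
    rw [hset, Set.forall_mem_image]
    exact fun a ha ↦ lie_mem_projectionDirection_of_isProj (hU a ha) hφ
  refine ⟨aeval C p φ, isProj_of_sub_mem_projectionDirection hφ (aeval_apply_sub_mem
    (mem_invtSubmodule_sl2Casimir hN) (sl2Casimir_apply_mem hN hlie) hXp), fun a ha ↦ ?_,
    fun T hT hTφ ↦ ?_⟩
  · rw [commute_iff_lie_eq, ← LieAlgebra.ad_apply K, ← Module.End.mul_apply,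
      hp _ (hset ▸ Set.mem_image_of_mem ad ha), LinearMap.zero_apply]
  · have hTC : Commute (ad T) C := by
      refine commute_sl2Casimir_right ?_
      rw [hset, Set.forall_mem_image]
      intro a ha
      rw [commute_iff_lie_eq, ← ad.map_lie, (hT a ha).lie_eq, map_zero]
    have hTp : Commute (ad T) (aeval C p) :=
      Algebra.commute_of_mem_adjoin_singleton_of_commute (aeval_mem_adjoin_singleton K _) hTC
    rw [commute_iff_lie_eq] at hTφ ⊢
    rw [← LieAlgebra.ad_apply K, ← Module.End.mul_apply, hTp.eq, Module.End.mul_apply,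
      LieAlgebra.ad_apply, hTφ, map_zero]

end Sl2Relations

section Graded

open DirectSum

variable {ι R M : Type*} [DecidableEq ι] [Semiring R] [AddCommMonoid M] [Module R M]
  (ℳ : ι → Submodule R M) [Decomposition ℳ]

/-- The projection of a graded module onto its component of degree `i`, as an endomorphism of the
whole module. -/
def gradedProj (i : ι) : Module.End R M :=
  (ℳ i).subtype ∘ₗ DirectSum.component R ι (ℳ ·) i ∘ₗ (decomposeLinearEquiv ℳ).toLinearMap

/-- The degree-zero part of an endomorphism `φ` of a graded module, given on the component of
degree `i` by `φ` followed by the projection back to that component. -/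
def diagonalPart (φ : Module.End R M) : Module.End R M :=
  DirectSum.toModule R ι M (fun i ↦ gradedProj ℳ i ∘ₗ φ ∘ₗ (ℳ i).subtype) ∘ₗ
    (decomposeLinearEquiv ℳ).toLinearMap

variable {ℳ} {i j : ι} {x : M} {φ : Module.End R M} {U : Submodule R M}

theorem gradedProj_mem : gradedProj ℳ i x ∈ ℳ i := (decompose ℳ x i).2

theorem gradedProj_of_mem_same (hx : x ∈ ℳ i) : gradedProj ℳ i x = x :=
  decompose_of_mem_same ℳ hx

theorem gradedProj_of_mem_ne (hx : x ∈ ℳ j) (hij : j ≠ i) : gradedProj ℳ i x = 0 :=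
  decompose_of_mem_ne ℳ hx hij

theorem diagonalPart_of_mem (hx : x ∈ ℳ i) : diagonalPart ℳ φ x = gradedProj ℳ i (φ x) := by
  lift x to ℳ i using hx
  simp [diagonalPart, DirectSum.toModule_lof]

theorem eq_iSup_inf_iff_forall_mem_invtSubmodule :
    U = ⨆ i, U ⊓ ℳ i ↔ ∀ i, U ∈ (gradedProj ℳ i).invtSubmodule := by
  classical
  constructor
  · intro hU i x hx
    rw [hU] at hx
    induction hx using Submodule.iSup_induction' with
    | mem j x hx =>
      by_cases hij : j = i
      · subst hij
        rw [Submodule.mem_comap, gradedProj_of_mem_same hx.2]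
        exact hx.1
      · rw [Submodule.mem_comap, gradedProj_of_mem_ne hx.2 hij]
        exact U.zero_mem
    | zero => exact Submodule.zero_mem _
    | add x y _ _ hx hy => exact Submodule.add_mem _ hx hy
  · refine fun hU ↦ le_antisymm (fun x hx ↦ ?_) (iSup_le fun i ↦ inf_le_left)
    rw [← sum_support_decompose ℳ x]
    exact Submodule.sum_mem _ fun i _ ↦ Submodule.mem_iSup_of_mem i ⟨hU i hx, gradedProj_mem⟩

theorem isProj_diagonalPart (hU : ∀ i, U ∈ (gradedProj ℳ i).invtSubmodule)
    (hφ : LinearMap.IsProj U φ) : LinearMap.IsProj U (diagonalPart ℳ φ) where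
  map_mem x := by
    induction x using Decomposition.inductionOn ℳ with
    | zero => simp only [map_zero, U.zero_mem]
    | homogeneous x =>
      rw [diagonalPart_of_mem x.2]
      exact hU _ (hφ.map_mem x)
    | add x y hx hy => simpa only [map_add] using U.add_mem hx hy
  map_id x hx := by
    rw [eq_iSup_inf_iff_forall_mem_invtSubmodule.mpr hU] at hx
    induction hx using Submodule.iSup_induction' with
    | mem j x hx => rw [diagonalPart_of_mem hx.2, hφ.map_id x hx.1, gradedProj_of_mem_same hx.2]
    | zero => exact map_zero _
    | add x y _ _ hx hy => rw [map_add, hx, hy]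

section Homogeneous

variable {F : Type*} [FunLike F M M] [AddMonoidHomClass F M M] {T : F} {σ : ι → ι}

theorem gradedProj_map_apply (hσ : σ.Injective) (hT : ∀ i, ∀ x ∈ ℳ i, T x ∈ ℳ (σ i)) (i : ι)
    (x : M) : gradedProj ℳ (σ i) (T x) = T (gradedProj ℳ i x) := by
  induction x using Decomposition.inductionOn ℳ with
  | zero => simp only [map_zero]
  | @homogeneous j x =>
    by_cases hij : j = i
    · subst hij
      rw [gradedProj_of_mem_same x.2, gradedProj_of_mem_same (hT j x x.2)]
    · rw [gradedProj_of_mem_ne x.2 hij, gradedProj_of_mem_ne (hT j x x.2) (hσ.ne hij), map_zero]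
  | add x y hx hy => simp only [map_add, hx, hy]

theorem diagonalPart_map_apply (hσ : σ.Injective) (hT : ∀ i, ∀ x ∈ ℳ i, T x ∈ ℳ (σ i))
    (hTφ : ∀ x, T (φ x) = φ (T x)) (x : M) :
    T (diagonalPart ℳ φ x) = diagonalPart ℳ φ (T x) := by
  induction x using Decomposition.inductionOn ℳ with
  | zero => simp only [map_zero]
  | @homogeneous j x =>
    rw [diagonalPart_of_mem x.2, diagonalPart_of_mem (hT j x x.2), ← hTφ,
      gradedProj_map_apply hσ hT]
  | add x y hx hy => simp only [map_add, hx, hy]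

end Homogeneous

theorem commute_gradedProj_diagonalPart : Commute (gradedProj ℳ i) (diagonalPart ℳ φ) :=
  LinearMap.ext fun x ↦ gradedProj_map_apply (σ := id) Function.injective_id
    (fun _ _ hx ↦ diagonalPart_of_mem hx ▸ gradedProj_mem) i x

end Graded

section Conjugation

variable {K M : Type*} [Field K] [AddCommGroup M] [Module K M] {σ : K →+* K}
  [RingHomInvPair σ σ]

/-- The average of an endomorphism and its conjugate by a semilinear involution `c`; it commutes
with `c`. -/
def conjAverage (c : M →ₛₗ[σ] M) (φ : Module.End K M) : Module.End K M :=
  (2 : K)⁻¹ • (φ + c.comp (φ.comp c))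

variable {c : M →ₛₗ[σ] M} {φ : Module.End K M}

theorem conjAverage_apply (x : M) : conjAverage c φ x = (2 : K)⁻¹ • (φ x + c (φ (c x))) := rfl

theorem isProj_conjAverage [NeZero (2 : K)] (hc : Function.Involutive c) {U : Submodule K M}
    (hU : ∀ x ∈ U, c x ∈ U) (hφ : LinearMap.IsProj U φ) :
    LinearMap.IsProj U (conjAverage c φ) where
  map_mem x := U.smul_mem _ (U.add_mem (hφ.map_mem x) (hU _ (hφ.map_mem _)))
  map_id x hx := by
    rw [conjAverage_apply, hφ.map_id x hx, hφ.map_id _ (hU x hx), hc x, ← two_smul K, smul_smul,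
      inv_mul_cancel₀ two_ne_zero, one_smul]

theorem map_conjAverage_apply (hc : Function.Involutive c) (x : M) :
    c (conjAverage c φ x) = conjAverage c φ (c x) := by
  rw [conjAverage_apply, conjAverage_apply, map_smulₛₗ, map_inv₀, map_ofNat, map_add, hc, hc,
    add_comm]

theorem commute_conjAverage {T : Module.End K M} (hTc : ∀ x, c (T x) = T (c x))
    (hTφ : Commute T φ) : Commute T (conjAverage c φ) := by
  have hTφ' (x : M) : T (φ x) = φ (T x) := congr($hTφ x)
  refine LinearMap.ext fun x ↦ ?_
  simp only [Module.End.mul_apply, conjAverage_apply, map_smul, map_add, hTφ', ← hTc]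

end Conjugation

section Stable

variable {R M : Type*} [Semiring R] [AddCommMonoid M] [Module R M] {σ : R →+* R}
  {T : M →ₛₗ[σ] M} {S : Set (Submodule R M)}

theorem sSup_le_comap_sSup (h : ∀ U ∈ S, U ≤ U.comap T) : sSup S ≤ (sSup S).comap T :=
  sSup_le fun U hU ↦ (h U hU).trans (Submodule.comap_mono (le_sSup hU))

theorem sInf_le_comap_sInf (h : ∀ U ∈ S, U ≤ U.comap T) : sInf S ≤ (sInf S).comap T :=
  fun _ hx ↦ Submodule.mem_sInf.mpr fun U hU ↦ h U hU (Submodule.mem_sInf.mp hx U hU)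

end Stable

section Cayley

theorem cayley_mem_iff {E : Type*} [AddCommGroup E] [Module ℂ E] (S : Submodule ℂ E) {a b y : E} :
    (a + b + Complex.I • y ∈ S ∧ a + b - Complex.I • y ∈ S ∧ a - b ∈ S) ↔
      a ∈ S ∧ b ∈ S ∧ y ∈ S := by
  constructor
  · rintro ⟨hp, hm, hz⟩
    have hs : a + b ∈ S := by
      convert S.smul_mem (2⁻¹ : ℂ) (S.add_mem hp hm) using 1
      module
    refine ⟨?_, ?_, ?_⟩
    · convert S.smul_mem (2⁻¹ : ℂ) (S.add_mem hs hz) using 1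
      module
    · convert S.smul_mem (2⁻¹ : ℂ) (S.sub_mem hs hz) using 1
      module
    · convert S.smul_mem (-Complex.I) (S.sub_mem hp hs) using 1
      rw [add_sub_cancel_left, smul_smul, neg_mul, Complex.I_mul_I, neg_neg, one_smul]
  · rintro ⟨ha, hb, hy⟩
    have hIy := S.smul_mem Complex.I hy
    exact ⟨S.add_mem (S.add_mem ha hb) hIy, S.sub_mem (S.add_mem ha hb) hIy, S.sub_mem ha hb⟩

end Cayley

namespace HorizontalSL2Data

variable {H : Type*} [AddCommGroup H] [Module ℂ H] (D : HorizontalSL2Data H)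

noncomputable instance : DirectSum.Decomposition D.Hpq :=
  D.internal.chooseDecomposition

/-- The three operators of the `j`-th `𝔰𝔩₂`-factor. -/
def triple (j : Fin 2) : Set (Module.End ℂ H) :=
  {D.Y j, D.Np j, D.Nm j}

/-- The linear operators under which invariant subspaces are stable: those of the two
`𝔰𝔩₂`-factors and the projections onto the Hodge pieces. -/
def operators : Set (Module.End ℂ H) :=
  (⋃ j, D.triple j) ∪ Set.range (gradedProj D.Hpq)

attribute [local instance] LieRing.ofAssociativeRing in
theorem sl2Relations (j : Fin 2) : Sl2Relations (D.Y j) (D.Np j) (D.Nm j) where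
  lie_e_f := D.sl2_NpNm j
  lie_h_e := (D.sl2_YNp j).trans (ofNat_smul_eq_nsmul ℂ 2 _)
  lie_h_f := (D.sl2_YNm j).trans (by rw [neg_smul, ofNat_smul_eq_nsmul])

variable {D} {U : Submodule ℂ H}

theorem isInvariant_iff : D.IsInvariant U ↔
    U ≤ U.comap D.c ∧ ∀ T ∈ D.operators, U ∈ T.invtSubmodule := by
  have htriple : (∀ T ∈ ⋃ j, D.triple j, U ∈ T.invtSubmodule) ↔ (∀ j, U ∈ (D.Y j).invtSubmodule) ∧
      (∀ j, U ∈ (D.Np j).invtSubmodule) ∧ ∀ j, U ∈ (D.Nm j).invtSubmodule := by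
    simp only [Set.mem_iUnion, forall_exists_index, triple, Set.mem_insert_iff,
      Set.mem_singleton_iff, ← forall_and]
    rw [forall_comm]
    simp only [forall_eq_or_imp, forall_eq]
  simp only [IsInvariant, eq_iSup_inf_iff_forall_mem_invtSubmodule, operators, Set.mem_union,
    or_imp, forall_and, htriple, Set.forall_mem_range]
  tauto

theorem commute_of_mem_triple {j j' : Fin 2} (hj : j ≠ j') {a b : Module.End ℂ H}
    (ha : a ∈ D.triple j) (hb : b ∈ D.triple j') : Commute a b := by
  obtain ⟨h₁, h₂, h₃, h₄, h₅, h₆, h₇, h₈, h₉⟩ := D.factors_commute j j' hj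
  rcases ha with rfl | rfl | rfl <;> rcases hb with rfl | rfl | rfl <;> assumption

theorem exists_isProj_commute_triple [FiniteDimensional ℂ H]
    (hU : ∀ j, ∀ a ∈ D.triple j, U ∈ a.invtSubmodule) :
    ∃ φ, LinearMap.IsProj U φ ∧ ∀ j, ∀ a ∈ D.triple j, Commute a φ := by
  obtain ⟨V, hUV⟩ := U.exists_isCompl
  obtain ⟨φ₀, hφ₀, h₀, -⟩ :=
    (D.sl2Relations 0).exists_isProj_commute (hU 0)
      ⟨Submodule.projection_apply_mem hUV, fun _ ↦ Submodule.projection_apply_of_mem_left hUV⟩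
  obtain ⟨φ₁, hφ₁, h₁, hcomm⟩ := (D.sl2Relations 1).exists_isProj_commute (hU 1) hφ₀
  refine ⟨φ₁, hφ₁, Fin.forall_fin_two.mpr ⟨fun a ha ↦ hcomm a (fun b hb ↦ ?_) (h₀ a ha), h₁⟩⟩
  exact commute_of_mem_triple zero_ne_one ha hb

theorem commute_diagonalPart {φ : Module.End ℂ H} {j : Fin 2}
    (hφ : ∀ a ∈ D.triple j, Commute a φ) :
    ∀ a ∈ D.triple j, Commute a (diagonalPart D.Hpq φ) := by
  have hcent (ψ : Module.End ℂ H) : (∀ a ∈ D.triple j, Commute a ψ) ↔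
      Commute (D.Np j + D.Nm j + Complex.I • D.Y j) ψ ∧
      Commute (D.Np j + D.Nm j - Complex.I • D.Y j) ψ ∧ Commute (D.Np j - D.Nm j) ψ := by
    have hmem (a) : a ∈ (Subalgebra.centralizer ℂ {ψ}).toSubmodule ↔ Commute a ψ := by
      rw [Subalgebra.mem_toSubmodule, Subalgebra.mem_centralizer_iff]
      simp only [Set.mem_singleton_iff, forall_eq]
      exact eq_comm
    simp only [← hmem, cayley_mem_iff, triple, Set.mem_insert_iff, Set.mem_singleton_iff,
      forall_eq_or_imp, forall_eq]
    tauto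
  rw [hcent] at hφ ⊢
  obtain ⟨hl, hr, hz⟩ := hφ
  refine ⟨?_, ?_, ?_⟩
  · exact LinearMap.ext (diagonalPart_map_apply (σ := (· - 1)) sub_left_injective
      (D.horizontal_lower j) fun x ↦ congr($hl x))
  · exact LinearMap.ext (diagonalPart_map_apply (σ := (· + 1)) (add_left_injective 1)
      (D.horizontal_raise j) fun x ↦ congr($hr x))
  · exact LinearMap.ext (diagonalPart_map_apply (σ := id) Function.injective_id
      (D.horizontal_zero j) fun x ↦ congr($hz x))

theorem exists_isProj_commute [FiniteDimensional ℂ H] (hU : D.IsInvariant U) :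
    ∃ φ, LinearMap.IsProj U φ ∧ (∀ x, D.c (φ x) = φ (D.c x)) ∧
      ∀ T ∈ D.operators, Commute T φ := by
  obtain ⟨hc, hT⟩ := isInvariant_iff.mp hU
  have htriple (j) (a) (ha : a ∈ D.triple j) : a ∈ D.operators :=
    .inl (Set.mem_iUnion.mpr ⟨j, ha⟩)
  obtain ⟨φ, hφ, hφa⟩ := exists_isProj_commute_triple fun j a ha ↦ hT a (htriple j a ha)
  have hψa (j) (a) (ha : a ∈ D.triple j) : Commute a (conjAverage D.c φ) := by
    refine commute_conjAverage ?_ (hφa j a ha)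
    rcases ha with rfl | rfl | rfl
    exacts [D.c_comm_Y j, D.c_comm_Np j, D.c_comm_Nm j]
  refine ⟨diagonalPart D.Hpq (conjAverage D.c φ), ?_, ?_, ?_⟩
  · exact isProj_diagonalPart (fun p ↦ hT _ (.inr ⟨p, rfl⟩)) (isProj_conjAverage D.c_invol hc hφ)
  · exact diagonalPart_map_apply (σ := (D.k - ·)) sub_right_injective D.conj_mem
      (map_conjAverage_apply D.c_invol)
  · rintro T (hT | ⟨p, rfl⟩)
    · obtain ⟨j, hj⟩ := Set.mem_iUnion.mp hT
      exact commute_diagonalPart (hψa j) T hj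
    · exact commute_gradedProj_diagonalPart

theorem IsInvariant.exists_isCompl [FiniteDimensional ℂ H] (hU : D.IsInvariant U) :
    ∃ V, D.IsInvariant V ∧ IsCompl U V := by
  obtain ⟨φ, hφ, hc, hT⟩ := exists_isProj_commute hU
  refine ⟨LinearMap.ker φ, isInvariant_iff.mpr ⟨fun x hx ↦ ?_, fun T hTD ↦
    (LinearMap.IsIdempotentElem.commute_iff hφ.isIdempotentElem).mp (hT T hTD).symm |>.2⟩,
    hφ.isCompl⟩
  rw [LinearMap.mem_ker] at hx
  rw [Submodule.mem_comap, LinearMap.mem_ker, ← hc, hx, map_zero]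

variable (D) in
/-- The invariant subspaces, as a complete sublattice of the lattice of all subspaces. -/
def invariantSubspaces : CompleteSublattice (Submodule ℂ H) :=
  .mk' {U | D.IsInvariant U}
    (fun _ hS ↦ isInvariant_iff.mpr
      ⟨sSup_le_comap_sSup fun _ hU ↦ (isInvariant_iff.mp (hS hU)).1,
        fun T hT ↦ sSup_le_comap_sSup fun _ hU ↦ (isInvariant_iff.mp (hS hU)).2 T hT⟩)
    (fun _ hS ↦ isInvariant_iff.mpr
      ⟨sInf_le_comap_sInf fun _ hU ↦ (isInvariant_iff.mp (hS hU)).1,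
        fun T hT ↦ sInf_le_comap_sInf fun _ hU ↦ (isInvariant_iff.mp (hS hU)).2 T hT⟩)

theorem isIrreducible_of_isAtom {U : D.invariantSubspaces} (hU : IsAtom U) :
    D.IsIrreducible (U : Submodule ℂ H) := by
  refine ⟨fun h ↦ hU.1 (Subtype.ext h), U.2, fun V hV hVU ↦ ?_⟩
  simpa [← Subtype.coe_inj] using hU.le_iff.mp (show (⟨V, hV⟩ : D.invariantSubspaces) ≤ U from hVU)

end HorizontalSL2Data

/-- A finite-dimensional complex vector space with real structure, Hodge structure of
weight `k`, and horizontal `(𝔰𝔩₂)²`-action defined over `ℝ` decomposes as an internal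
direct sum of finitely many invariant irreducible subspaces. -/
theorem exists_decomposition_into_invariant_irreducibles
    (H : Type*) [AddCommGroup H] [Module ℂ H] [FiniteDimensional ℂ H]
    (D : HorizontalSL2Data H) :
    ∃ (n : ℕ) (U : Fin n → Submodule ℂ H),
      (∀ i, D.IsIrreducible (U i)) ∧ DirectSum.IsInternal U := by
  obtain ⟨n, U, hatom, hind, htop⟩ := exists_fin_isAtom_iSupIndep_coe_iSup_coe_eq_top
    D.invariantSubspaces fun U hU ↦ hU.exists_isCompl
  exact ⟨n, fun i ↦ U i, fun i ↦ HorizontalSL2Data.isIrreducible_of_isAtom (hatom i),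
    DirectSum.isInternal_submodule_of_iSupIndep_of_iSup_eq_top hind htop⟩
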